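/- Let λ and μ be gl_n-highest weights. Assume that for each pair 1 ≤ i < j ≤ n one has: either (m_j ∉ ⟨l_j, l_i⟩ and m_i ∉ ⟨l_j, l_i⟩) or (l_j ∉ ⟨m_j, m_i⟩ and l_i ∉ ⟨m_j, m_i⟩); assume moreover that m_1 ∉ ⟨l_n, l_1⟩ and m_n ∉ ⟨l_n, l_1⟩. Let η ∈ L(λ) and η' ∈ L(μ) be lowest vectors. If ζ' ∈ L(λ)⊗L(μ) satisfies (E_{ij}⊗1 + 1⊗E_{ij})ζ' = 0 and (Σ_{a=1}^n E_{ia}⊗E_{aj})ζ' = 0 for all 1 ≤ j < i ≤ n (i.e., t_{ij}(u)ζ' = 0 for all i > j), then ζ' is a scalar multiple of η⊗η'. -/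

import Mathlib

open scoped TensorProduct

/-- An `n`-tuple of complex numbers is a `gl_n`-highest weight if the consecutive
differences `λ_i - λ_{i+1}` are non-negative integers. -/
def IsGLHighestWeight (n : ℕ) (lam : Fin n → ℂ) : Prop :=
  ∀ i : Fin n, ∀ h : (i : ℕ) + 1 < n, ∃ N : ℕ, lam i - lam ⟨(i : ℕ) + 1, h⟩ = N

/-- A realization of the irreducible finite-dimensional `gl_n`-module `L(λ)`
with highest weight `lam`, given by the action of the matrix units `E i j`. -/
structure GLRep (n : ℕ) (lam : Fin n → ℂ) where
  V : Type
  [instAddCommGroup : AddCommGroup V]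
  [instModule : Module ℂ V]
  [instFiniteDimensional : FiniteDimensional ℂ V]
  E : Fin n → Fin n → (V →ₗ[ℂ] V)
  commRel : ∀ i j k l : Fin n,
    E i j ∘ₗ E k l - E k l ∘ₗ E i j
      = (if j = k then E i l else 0) - (if l = i then E k j else 0)
  hv : V
  hv_ne : hv ≠ 0
  hv_upper : ∀ i j : Fin n, i < j → E i j hv = 0
  hv_diag : ∀ i : Fin n, E i i hv = lam i • hv
  irreducible : ∀ U : Submodule ℂ V,
    (∀ i j : Fin n, ∀ v ∈ U, E i j v ∈ U) → U = ⊥ ∨ U = ⊤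

attribute [instance] GLRep.instAddCommGroup GLRep.instModule GLRep.instFiniteDimensional

/-- The action of the Yangian generator `t_{ij}^{(1)}` on `L(λ) ⊗ L(μ)`
(both evaluation modules evaluated at `0`). -/
noncomputable def t1 {n : ℕ} {lam mu : Fin n → ℂ} (A : GLRep n lam) (B : GLRep n mu)
    (i j : Fin n) : A.V ⊗[ℂ] B.V →ₗ[ℂ] A.V ⊗[ℂ] B.V :=
  TensorProduct.map (A.E i j) LinearMap.id + TensorProduct.map LinearMap.id (B.E i j)

/-- The action of the Yangian generator `t_{ij}^{(2)}` on `L(λ) ⊗ L(μ)`. -/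
noncomputable def t2 {n : ℕ} {lam mu : Fin n → ℂ} (A : GLRep n lam) (B : GLRep n mu)
    (i j : Fin n) : A.V ⊗[ℂ] B.V →ₗ[ℂ] A.V ⊗[ℂ] B.V :=
  ∑ a : Fin n, TensorProduct.map (A.E i a) (B.E a j)

/-- Irreducibility of `L(λ) ⊗ L(μ)` as a module over the Yangian `Y(gl_n)`:
the only subspaces invariant under all the operators `t1` and `t2`
(the generators `t_{ij}^{(r)}` with `r ≥ 3` acting as zero) are `⊥` and `⊤`. -/
def YangianIrred2 {n : ℕ} {lam mu : Fin n → ℂ} (A : GLRep n lam) (B : GLRep n mu) : Prop :=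
  ∀ U : Submodule ℂ (A.V ⊗[ℂ] B.V),
    (∀ i j : Fin n, ∀ v ∈ U, t1 A B i j v ∈ U) →
    (∀ i j : Fin n, ∀ v ∈ U, t2 A B i j v ∈ U) →
    U = ⊥ ∨ U = ⊤

/-- The shifted weight `l_i = λ_i − i + 1` (with `0`-indexed entries:
`l i = lam i - i`). -/
def lshiftC (n : ℕ) (lam : Fin n → ℂ) : Fin n → ℂ :=
  fun i => lam i - ((i : ℕ) : ℂ)

/-- The set `⟨l_j, l_i⟩ = {l_j + t : t ∈ ℤ, 0 ≤ t ≤ l_i − l_j} \ {l_s : i ≤ s ≤ j}`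
for a pair of indices `i < j`. -/
def bracketC (n : ℕ) (l : Fin n → ℂ) (i j : Fin n) : Set ℂ :=
  {x | (∃ t : ℕ, x = l j + (t : ℂ)) ∧ (∃ t : ℕ, l i = x + (t : ℂ)) ∧
    ∀ s : Fin n, i ≤ s → s ≤ j → x ≠ l s}

/-- The condition `m_j, m_i ∉ ⟨l_j, l_i⟩ or l_j, l_i ∉ ⟨m_j, m_i⟩` for a pair
of indices `i < j`. -/
def SepCond (n : ℕ) (lam mu : Fin n → ℂ) (i j : Fin n) : Prop :=
  (lshiftC n mu j ∉ bracketC n (lshiftC n lam) i j ∧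
      lshiftC n mu i ∉ bracketC n (lshiftC n lam) i j) ∨
  (lshiftC n lam j ∉ bracketC n (lshiftC n mu) i j ∧
      lshiftC n lam i ∉ bracketC n (lshiftC n mu) i j)

/-!
Relabelling the basis by `i ↦ n + 1 - i` turns the claim into its analogue for a vector `ζ` killed
by all `t_{ij}^{(r)}` with `i < j`. Such a `ζ` is determined by its component `v ∈ L(λ)` along the
highest vector of `L(μ)`, and `v` satisfies the quadratic relations
`∑_{a < j} E_{ia} E_{aj} v = μ_j E_{ij} v` as well as `E_{ij}^{μ_i - μ_j + 1} v = 0`. It remains to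
see that a solution `v` without component along the highest vector of `L(λ)` vanishes.

Otherwise take `v` to be a weight vector and let `j` be the first column in which some `E_{rj}`,
`r < j`, does not kill it. For the least such `r`, the quadratic relation forces
the shifted weight of `v` at `r` to be `m_j`, and the last nonzero `E_{rj}^N v` is highest for
`gl_j` and again satisfies the relations in the later columns. Repeating this column by column
leads to the highest vector of `L(λ)`. Following the shifted weights along the way gives
`l_r = m_j + N` and an index `J ≥ j` with `m_J ∈ ⟨l_J, l_r⟩` and `l_r ∈ ⟨m_J, m_r⟩`, contrary to
the separation condition for `r < J`.
-/

/-! ### The integral order on `ℂ` -/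

/-- The integral order on `ℂ`: `y - x` is a natural number. -/
def NatLE (x y : ℂ) : Prop := ∃ t : ℕ, y = x + t

/-- The strict version of `NatLE`: `y - x` is a positive integer. -/
def NatLT (x y : ℂ) : Prop := NatLE (x + 1) y

lemma NatLE.refl (x : ℂ) : NatLE x x := ⟨0, by simp⟩

lemma NatLE.trans {x y z : ℂ} : NatLE x y → NatLE y z → NatLE x z := by
  rintro ⟨s, rfl⟩ ⟨t, rfl⟩
  exact ⟨s + t, by push_cast; ring⟩

lemma NatLE.trans_lt {x y z : ℂ} (hxy : NatLE x y) : NatLT y z → NatLT x z := by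
  rintro ⟨t, rfl⟩
  obtain ⟨s, rfl⟩ := hxy
  exact ⟨s + t, by push_cast; ring⟩

lemma NatLT.le {x y : ℂ} : NatLT x y → NatLE x y := by
  rintro ⟨t, rfl⟩
  exact ⟨1 + t, by push_cast; ring⟩

lemma NatLT.trans_le {x y z : ℂ} (hxy : NatLT x y) (hyz : NatLE y z) : NatLT x z :=
  NatLE.trans hxy hyz

lemma NatLT.ne {x y : ℂ} : NatLT x y → x ≠ y := by
  rintro ⟨t, rfl⟩ h
  have : (1 + t : ℂ) = 0 := by linear_combination -h
  exact absurd this (by norm_cast; omega)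

lemma natLT_add_natCast (x : ℂ) {N : ℕ} (hN : 0 < N) : NatLT x (x + N) :=
  ⟨N - 1, by rw [Nat.cast_sub hN]; push_cast; ring⟩

lemma NatLE.natLT_sub_natCast {x y : ℂ} {p q : ℕ} (hpq : p < q) :
    NatLE x y → NatLT (x - q) (y - p) := by
  rintro ⟨t, rfl⟩
  obtain ⟨d, rfl⟩ := Nat.exists_eq_add_of_lt hpq
  exact ⟨t + d, by push_cast; ring⟩

lemma natLT_lshiftC {n : ℕ} {ν : Fin n → ℂ} {i j : Fin n} (hij : i < j)
    (h : NatLE (ν j) (ν i)) : NatLT (lshiftC n ν j) (lshiftC n ν i) :=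
  h.natLT_sub_natCast hij

lemma natLE_lshiftC {n : ℕ} {ν : Fin n → ℂ} (hν : ∀ i j, i < j → NatLE (ν j) (ν i))
    {i j : Fin n} (hij : i ≤ j) : NatLE (lshiftC n ν j) (lshiftC n ν i) := by
  obtain rfl | hij := hij.eq_or_lt
  · exact NatLE.refl _
  · exact (natLT_lshiftC hij (hν i j hij)).le

/-! ### Commutators of linear operators -/

attribute [local instance] LieRing.ofAssociativeRing

section Commutator

variable {R : Type*} [Ring R] {x y : R}

lemma lie_mul_eq (x y z : R) : ⁅x, y * z⁆ = ⁅x, y⁆ * z + y * ⁅x, z⁆ := by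
  simp only [Ring.lie_def]
  noncomm_ring

lemma lie_pow_succ_of_commute (h : Commute y ⁅x, y⁆) (N : ℕ) :
    ⁅x, y ^ (N + 1)⁆ = (N + 1) • (y ^ N * ⁅x, y⁆) := by
  induction N with
  | zero => simp
  | succ N ih =>
    calc ⁅x, y ^ (N + 1 + 1)⁆ = ⁅x, y ^ (N + 1)⁆ * y + y ^ (N + 1) * ⁅x, y⁆ := by
          rw [pow_succ, lie_mul_eq]
      _ = (N + 1) • (y ^ (N + 1) * ⁅x, y⁆) + y ^ (N + 1) * ⁅x, y⁆ := by
          rw [ih, smul_mul_assoc, mul_assoc, ← h.eq, ← mul_assoc, ← pow_succ]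
      _ = (N + 1 + 1) • (y ^ (N + 1) * ⁅x, y⁆) := (succ_nsmul _ _).symm

end Commutator

section Operators

variable {k V : Type*} [Field k] [AddCommGroup V] [Module k V] {x y : Module.End k V}

lemma lie_pow_of_lie_eq_smul {c : k} (h : ⁅x, y⁆ = c • y) (N : ℕ) :
    ⁅x, y ^ N⁆ = (N * c) • y ^ N := by
  cases N with
  | zero => simp [Ring.lie_def]
  | succ N =>
    rw [lie_pow_succ_of_commute (h ▸ (Commute.refl y).smul_right c), h, mul_smul_comm, ← pow_succ,
      ← Nat.cast_smul_eq_nsmul k, smul_smul]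

lemma apply_pow_apply_of_lie_eq_smul {c a : k} (h : ⁅x, y⁆ = c • y) {v : V} (hv : x v = a • v)
    (N : ℕ) : x ((y ^ N) v) = (a + N * c) • (y ^ N) v := by
  have := leibniz_lie x (y ^ N) v
  simp only [lie_pow_of_lie_eq_smul h, Module.End.lie_apply, LinearMap.smul_apply, hv,
    map_smul] at this
  rw [this, add_comm, add_smul]

lemma pow_apply_eq_zero_of_lie_commute [CharZero k] (hx : Commute x ⁅x, y⁆)
    (hy : Commute y ⁅x, y⁆) {N : ℕ} {v : V} (hxv : x v = 0) (hyv : (y ^ N) v = 0) :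
    (⁅x, y⁆ ^ N) v = 0 := by
  induction N generalizing v with
  | zero => simpa using hyv
  | succ N ih =>
    rw [pow_succ, Module.End.mul_apply]
    refine ih ?_ ?_
    · rw [← Module.End.mul_apply, hx.eq, Module.End.mul_apply, hxv, map_zero]
    · have := leibniz_lie x (y ^ (N + 1)) v
      rw [lie_pow_succ_of_commute hy, ← Nat.cast_smul_eq_nsmul k] at this
      simp only [Module.End.lie_apply, hyv, hxv, map_zero, add_zero, LinearMap.smul_apply,
        Module.End.mul_apply] at this
      exact (smul_eq_zero.mp this.symm).resolve_left (Nat.cast_ne_zero.mpr N.succ_ne_zero)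

/-- The powers of `y` are eigenvectors of `ad x` with pairwise distinct eigenvalues. -/
lemma isNilpotent_of_lie_eq_smul [CharZero k] [FiniteDimensional k V] {c : k} (hc : c ≠ 0)
    (h : ⁅x, y⁆ = c • y) : IsNilpotent y := by
  by_contra hcon
  have hinj : Function.Injective fun N : ℕ => (N : k) * c := fun s t hst =>
    Nat.cast_injective (mul_right_cancel₀ hc hst)
  refine Set.infinite_of_injective_forall_mem hinj (fun N => ?_)
    (Module.End.finite_hasEigenvalue (LieAlgebra.ad k (Module.End k V) x))
  exact Module.End.hasEigenvalue_of_hasEigenvector (x := y ^ N)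
    ⟨Module.End.mem_eigenspace_iff.mpr (lie_pow_of_lie_eq_smul h N), fun h0 => hcon ⟨N, h0⟩⟩

lemma exists_pow_apply_ne_zero (hy : IsNilpotent y) {v : V} (hv : v ≠ 0) :
    ∃ N : ℕ, (y ^ N) v ≠ 0 ∧ (y ^ (N + 1)) v = 0 := by
  obtain ⟨N, hN⟩ := hy
  exact Nat.exists_not_and_succ_of_not_zero_of_exists (p := fun N => (y ^ N) v = 0) (by simpa)
    ⟨N, by simp [hN]⟩

lemma pow_apply_eq_zero_of_le {M N : ℕ} (hMN : M ≤ N) {v : V} (h : (y ^ M) v = 0) :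
    (y ^ N) v = 0 := by
  rw [← Nat.sub_add_cancel hMN, pow_add, Module.End.mul_apply, h, map_zero]

end Operators

/-! ### Weights of `sl₂`-triples of operators -/

section Sl2

variable {k V : Type*} [Field k] [AddCommGroup V] [Module k V] {h e f : Module.End k V}

lemma exists_pow_succ_mul_eq (t : IsSl2Triple h e f) (p : ℕ) :
    ∃ T : Module.End k V, e ^ (p + 1) * f = T * e ^ p := by
  suffices ∃ c : ℤ, e ^ (p + 1) * f = (f * e + (p + 1) • h + c • 1) * e ^ p from
    let ⟨_, hc⟩ := this; ⟨_, hc⟩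
  have hef : e * f = f * e + h := by rw [← t.lie_e_f, Ring.lie_def]; abel
  have heh : e * h = h * e - 2 • e := by rw [← t.lie_h_e_nsmul, Ring.lie_def]; abel
  induction p with
  | zero => exact ⟨0, by simp [hef]⟩
  | succ p ih =>
    obtain ⟨c, hc⟩ := ih
    refine ⟨c - 2 * (p + 1), ?_⟩
    have : e * (f * e + (p + 1) • h + c • 1)
        = (f * e + (p + 1 + 1) • h + (c - 2 * (p + 1)) • 1) * e := by
      simp only [mul_add, mul_smul_comm, ← mul_assoc, hef, heh, add_mul, smul_mul_assoc, mul_one,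
        one_mul]
      module
    rw [pow_succ' e (p + 1), mul_assoc, hc, ← mul_assoc, this, mul_assoc, ← pow_succ']

variable [CharZero k] [FiniteDimensional k V]

lemma exists_nat_weight_of_apply_eq_zero (t : IsSl2Triple h e f) {v : V} {c : k} (hv : v ≠ 0)
    (hhv : h v = c • v) (hev : e v = 0) :
    ∃ N : ℕ, c = N ∧ (f ^ N) v ≠ 0 ∧ (f ^ (N + 1)) v = 0 := by
  have P : t.HasPrimitiveVectorWith v c := ⟨hv, hhv, hev⟩
  obtain ⟨N, hN⟩ := P.exists_nat
  have hne := P.pow_toEnd_f_ne_zero_of_eq_nat hN le_rfl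
  have hzero := P.pow_toEnd_f_eq_zero_of_eq_nat hN
  rw [LieModule.toEnd_module_end] at hne hzero
  exact ⟨N, hN, hne, hzero⟩

lemma exists_nat_weight_add (t : IsSl2Triple h e f) {v : V} {c : k} {N : ℕ} (hv : v ≠ 0)
    (hhv : h v = c • v) (hev : (e ^ (N + 1)) v = 0) : ∃ t : ℕ, c + N = t := by
  have hhf : ⁅h, f⁆ = (-2 : k) • f := by rw [t.lie_h_f_nsmul]; module
  obtain ⟨q, hq, hq'⟩ := exists_pow_apply_ne_zero (isNilpotent_of_lie_eq_smul (by norm_num) hhf) hv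
  have hkill : ∀ q : ℕ, (e ^ (N + q + 1)) ((f ^ q) v) = 0 := by
    intro q
    induction q with
    | zero => simpa using hev
    | succ q ih =>
      obtain ⟨T, hT⟩ := exists_pow_succ_mul_eq t (N + q + 1)
      rw [pow_succ' f, Module.End.mul_apply, ← add_assoc N q 1, ← Module.End.mul_apply (f := e ^ _),
        hT, Module.End.mul_apply, ih, map_zero]
  have hlow : (-h) ((f ^ q) v) = (2 * q - c) • (f ^ q) v := by
    rw [LinearMap.neg_apply, apply_pow_apply_of_lie_eq_smul hhf hhv]
    module
  obtain ⟨M, hM, hne, -⟩ := exists_nat_weight_of_apply_eq_zero t.symm hq hlow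
    (by rwa [← Module.End.mul_apply, ← pow_succ'])
  have hMq : M ≤ N + q := by
    by_contra hlt
    exact hne (pow_apply_eq_zero_of_le (not_le.mp hlt) (hkill q))
  exact ⟨N + q - M + q, by rw [Nat.cast_add, Nat.cast_sub hMq, ← hM]; push_cast; ring⟩

end Sl2

/-! ### Weights and lowering operators -/

namespace GLRep

variable {n : ℕ} {lam : Fin n → ℂ} (A : GLRep n lam)

/-- The weight `ε_a - ε_b` of the matrix unit `E a b` under the adjoint action of the diagonal
matrices. -/
def root (a b : Fin n) : Fin n → ℂ := Pi.single a 1 - Pi.single b 1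

lemma lshiftC_add_root_of_ne (ν : Fin n → ℂ) (N : ℕ) {a b i : Fin n} (ha : i ≠ a) (hb : i ≠ b) :
    lshiftC n (ν + N • root a b) i = lshiftC n ν i := by
  simp [lshiftC, root, ha, hb]

lemma lshiftC_add_root_left (ν : Fin n → ℂ) (N : ℕ) {a b : Fin n} (hab : a ≠ b) :
    lshiftC n (ν + N • root a b) a = lshiftC n ν a + N := by
  simp [lshiftC, root, hab]
  ring

lemma lie_E (i j k l : Fin n) : ⁅A.E i j, A.E k l⁆ =
    (if j = k then A.E i l else 0) - (if l = i then A.E k j else 0) :=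
  A.commRel i j k l

lemma lie_E_of_ne {i l : Fin n} (j : Fin n) (hli : l ≠ i) : ⁅A.E i j, A.E j l⁆ = A.E i l := by
  simp [lie_E, hli]

lemma commute_E {i j k l : Fin n} (hjk : j ≠ k) (hli : l ≠ i) : Commute (A.E i j) (A.E k l) := by
  simp [commute_iff_lie_eq, lie_E, hjk, hli]

lemma lie_E_diag (i a b : Fin n) : ⁅A.E i i, A.E a b⁆ = root a b i • A.E a b := by
  simp only [lie_E, root, Pi.sub_apply, Pi.single_apply, sub_smul, ite_smul, one_smul, zero_smul]
  congr 1
  · split_ifs with h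
    · rw [h]
    · rfl
  · simp only [eq_comm (a := b)]
    split_ifs with h
    · rw [h]
    · rfl

lemma E_apply_E (i j k l : Fin n) (v : A.V) :
    A.E i j (A.E k l v) = A.E k l (A.E i j v) + ⁅A.E i j, A.E k l⁆ v := by
  simp [Ring.lie_def]

/-- `v` is a (possibly zero) vector of weight `ν`. -/
def IsWeightVector (ν : Fin n → ℂ) (v : A.V) : Prop := ∀ i, A.E i i v = ν i • v

variable {A}

lemma IsWeightVector.pow {ν : Fin n → ℂ} {v : A.V} (hv : A.IsWeightVector ν v) (a b : Fin n)
    (N : ℕ) : A.IsWeightVector (ν + N • root a b) ((A.E a b ^ N) v) := fun i => by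
  rw [apply_pow_apply_of_lie_eq_smul (A.lie_E_diag i a b) (hv i)]
  simp

lemma IsWeightVector.unique {ν ν' : Fin n → ℂ} {v : A.V} (hv : A.IsWeightVector ν v)
    (hv' : A.IsWeightVector ν' v) (hv0 : v ≠ 0) : ν = ν' :=
  funext fun i => smul_left_injective ℂ hv0 ((hv i).symm.trans (hv' i))

variable (A)

lemma isSl2Triple {i j : Fin n} (hij : i ≠ j) (h0 : A.E i i - A.E j j ≠ 0) :
    IsSl2Triple (A.E i i - A.E j j) (A.E i j) (A.E j i) where
  h_ne_zero := h0
  lie_e_f := by simp [lie_E]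
  lie_h_e_nsmul := by simp [sub_lie, lie_E, hij.symm, two_smul]
  lie_h_f_nsmul := by simp [sub_lie, lie_E, hij, two_smul]; abel

lemma isNilpotent_E {i j : Fin n} (hij : i ≠ j) : IsNilpotent (A.E i j) :=
  isNilpotent_of_lie_eq_smul (x := A.E i i) one_ne_zero (by simp [lie_E, hij.symm])

variable {A}

lemma IsWeightVector.sub_apply {ν : Fin n → ℂ} {v : A.V} (hv : A.IsWeightVector ν v)
    (i j : Fin n) : (A.E i i - A.E j j) v = (ν i - ν j) • v := by
  rw [LinearMap.sub_apply, hv, hv, sub_smul]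

lemma IsWeightVector.exists_nat_sub_eq {ν : Fin n → ℂ} {v : A.V} (hv : A.IsWeightVector ν v)
    (hv0 : v ≠ 0) {i j : Fin n} (hij : i ≠ j) (hup : A.E i j v = 0) :
    ∃ N : ℕ, ν i - ν j = N ∧ (A.E j i ^ N) v ≠ 0 ∧ (A.E j i ^ (N + 1)) v = 0 := by
  by_cases h0 : A.E i i - A.E j j = 0
  · have hν := hv.sub_apply i j
    rw [h0, LinearMap.zero_apply, eq_comm, smul_eq_zero, or_iff_left hv0] at hν
    refine ⟨0, by simp [hν], by simpa, ?_⟩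
    have := IsAddTorsionFree.of_isTorsionFree ℂ (Module.End ℂ A.V)
    have hneg : A.E j i = -A.E j i := by
      simpa [sub_eq_zero.mp h0, lie_E, hij, hij.symm] using A.lie_E i i j i
    simp [self_eq_neg.mp hneg]
  · exact exists_nat_weight_of_apply_eq_zero (A.isSl2Triple hij h0) hv0 (hv.sub_apply i j) hup

lemma IsWeightVector.natLE_of_pow_apply_eq_zero {ν : Fin n → ℂ} {v : A.V}
    (hv : A.IsWeightVector ν v) (hv0 : v ≠ 0) {i j : Fin n} (hij : i ≠ j) {N : ℕ}
    (hN : (A.E i j ^ (N + 1)) v = 0) : NatLE (ν j - N) (ν i) := by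
  suffices ∃ t : ℕ, ν i - ν j + N = t from
    let ⟨t, ht⟩ := this; ⟨t, by linear_combination ht⟩
  by_cases h0 : A.E i i - A.E j j = 0
  · have hν := hv.sub_apply i j
    rw [h0, LinearMap.zero_apply, eq_comm, smul_eq_zero, or_iff_left hv0] at hν
    exact ⟨N, by simp [hν]⟩
  · exact exists_nat_weight_add (A.isSl2Triple hij h0) hv0 (hv.sub_apply i j) hN

variable (A)

lemma eq_top_of_hv_mem {P : Submodule ℂ A.V} (hvP : A.hv ∈ P)
    (hP : ∀ i j : Fin n, j < i → ∀ v ∈ P, A.E i j v ∈ P) : P = ⊤ := by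
  let S : Set (Submodule ℂ A.V) :=
    {Q | A.hv ∈ Q ∧ ∀ i j : Fin n, j < i → ∀ v ∈ Q, A.E i j v ∈ Q}
  have hlow : ∀ i j : Fin n, j < i → ∀ v ∈ sInf S, A.E i j v ∈ sInf S := fun i j hij v hv =>
    Submodule.mem_sInf.mpr fun Q hQ => hQ.2 i j hij v (Submodule.mem_sInf.mp hv Q hQ)
  have hvS : A.hv ∈ sInf S := Submodule.mem_sInf.mpr fun Q hQ => hQ.1
  let Q : Submodule ℂ A.V := sInf S ⊓ ⨅ a, ⨅ b, (sInf S).comap (A.E a b)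
  have mem_Q : ∀ w, w ∈ Q ↔ w ∈ sInf S ∧ ∀ a b, A.E a b w ∈ sInf S := fun w => by
    simp only [Q, Submodule.mem_inf, Submodule.mem_iInf, Submodule.mem_comap]
  have hQS : Q ∈ S := by
    refine ⟨(mem_Q _).mpr ⟨hvS, fun a b => ?_⟩, fun i j hij v hv => ?_⟩
    · rcases lt_trichotomy a b with h | rfl | h
      · rw [A.hv_upper a b h]
        exact zero_mem _
      · rw [A.hv_diag]
        exact Submodule.smul_mem _ _ hvS
      · exact hlow a b h _ hvS
    · obtain ⟨-, hv⟩ := (mem_Q v).mp hv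
      refine (mem_Q _).mpr ⟨hv i j, fun a b => ?_⟩
      rw [E_apply_E, lie_E]
      refine add_mem (hlow i j hij _ (hv a b)) ?_
      split_ifs <;> simp [hv, sub_mem]
  have htop : sInf S = ⊤ :=
    (A.irreducible (sInf S) fun a b v hv => ((mem_Q v).mp (sInf_le hQS hv)).2 a b).resolve_left
      fun h => A.hv_ne ((Submodule.mem_bot ℂ).mp (h ▸ hvS))
  exact top_unique (htop ▸ sInf_le ⟨hvP, hP⟩)

/-! ### The highest weight functional and the dual module -/

/-- The grading element `∑ i • E i i`, for which `E a b` has degree `a - b`. -/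
noncomputable def grading : Module.End ℂ A.V := ∑ i : Fin n, ((i : ℕ) : ℂ) • A.E i i

lemma lie_grading (a b : Fin n) :
    ⁅A.grading, A.E a b⁆ = (((a : ℕ) : ℂ) - ((b : ℕ) : ℂ)) • A.E a b := by
  simp only [grading, LieRing.of_associative_ring_bracket, Finset.sum_mul, Finset.mul_sum,
    ← Finset.sum_sub_distrib, smul_mul_assoc, mul_smul_comm, ← smul_sub]
  simp only [← Ring.lie_def, lie_E_diag, smul_smul, ← Finset.sum_smul, root, Pi.sub_apply,
    mul_sub, Finset.sum_sub_distrib, Pi.single_apply]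
  simp

/-- A highest weight functional: a highest weight vector of the contragredient module. -/
structure IsHighestFunctional (φ : Module.Dual ℂ A.V) : Prop where
  apply_hv_ne_zero : φ A.hv ≠ 0
  comp_lower : ∀ i j : Fin n, j < i → φ ∘ₗ A.E i j = 0
  comp_diag : ∀ i, φ ∘ₗ A.E i i = lam i • φ

/-- The lowering operators strictly decrease the degree of a functional, hence kill a functional
of degree of minimal real part. -/
lemma exists_dual_comp_lower_eq_zero :
    ∃ φ : Module.Dual ℂ A.V, φ ≠ 0 ∧ ∀ i j : Fin n, j < i → φ ∘ₗ A.E i j = 0 := by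
  have : Nontrivial A.V := ⟨A.hv, 0, A.hv_ne⟩
  let G : Module.End ℂ (Module.Dual ℂ A.V) := A.grading.dualMap
  obtain ⟨a, ha, hmin⟩ := (Module.End.finite_hasEigenvalue G).exists_minimalFor Complex.re _
    (Module.End.exists_eigenvalue G)
  obtain ⟨φ, hφ⟩ := ha.exists_hasEigenvector
  refine ⟨φ, hφ.2, fun i j hij => by_contra fun hne => ?_⟩
  have hG : G (φ ∘ₗ A.E i j) = (a - ((i : ℕ) - (j : ℕ))) • φ ∘ₗ A.E i j := by
    ext w
    have hw := LinearMap.congr_fun hφ.apply_eq_smul (A.E i j w)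
    have hlie := congrArg φ (LinearMap.congr_fun (A.lie_grading i j) w)
    simp only [Ring.lie_def, LinearMap.sub_apply, Module.End.mul_apply, LinearMap.smul_apply,
      map_sub, map_smul, smul_eq_mul] at hlie
    simp only [G, LinearMap.dualMap_apply, LinearMap.smul_apply, LinearMap.comp_apply,
      smul_eq_mul] at hw ⊢
    linear_combination hw - hlie
  have hle : a.re ≤ (a - ((i : ℕ) - (j : ℕ))).re :=
    hmin (Module.End.hasEigenvalue_of_hasEigenvector
      ⟨Module.End.mem_eigenspace_iff.mpr hG, hne⟩) (by simp [hij.le])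
  simp only [Complex.sub_re, Complex.natCast_re] at hle
  linarith [(Nat.cast_lt (α := ℝ)).mpr hij]

lemma exists_isHighestFunctional : ∃ φ, A.IsHighestFunctional φ := by
  obtain ⟨φ, hφ0, hφ⟩ := A.exists_dual_comp_lower_eq_zero
  have hlow : ∀ i j : Fin n, j < i → ∀ w, φ (A.E i j w) = 0 := fun i j hij w =>
    LinearMap.congr_fun (hφ i j hij) w
  refine ⟨φ, fun h0 => hφ0 ?_, hφ, fun k => ?_⟩
  · exact LinearMap.ker_eq_top.mp (A.eq_top_of_hv_mem h0 fun i j hij v _ => hlow i j hij v)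
  · refine sub_eq_zero.mp (LinearMap.ker_eq_top.mp (A.eq_top_of_hv_mem ?_ fun i j hij v _ => ?_))
    · simp [A.hv_diag]
    · change φ (A.E k k (A.E i j v)) - lam k * φ (A.E i j v) = 0
      rw [E_apply_E, lie_E_diag]
      simp [hlow i j hij]

variable {A}

/-- The contragredient module, on which `E i j` acts by the transpose of `E j i`. -/
noncomputable def dual {φ : Module.Dual ℂ A.V} (hφ : A.IsHighestFunctional φ) : GLRep n lam where
  V := Module.Dual ℂ A.V
  E i j := (A.E j i).dualMap
  commRel i j k l := by
    ext ψ w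
    have h := congrArg (fun T => ψ (T w)) (A.commRel l k j i)
    simp only [LinearMap.sub_apply, LinearMap.comp_apply, map_sub] at h
    simp only [LinearMap.sub_apply, LinearMap.comp_apply, LinearMap.dualMap_apply, h,
      eq_comm (a := k), eq_comm (a := i)]
    split_ifs <;> simp
  hv := φ
  hv_ne h := hφ.apply_hv_ne_zero (by rw [h, LinearMap.zero_apply])
  hv_upper i j hij := hφ.comp_lower j i hij
  hv_diag := hφ.comp_diag
  irreducible U hU := by
    have hstable : ∀ i j, ∀ v ∈ U.dualCoannihilator, A.E i j v ∈ U.dualCoannihilator := by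
      intro i j v hv
      rw [Submodule.mem_dualCoannihilator] at hv ⊢
      exact fun ψ hψ => hv _ (hU j i ψ hψ)
    rw [← Subspace.dualCoannihilator_dualAnnihilator_eq (W := U)]
    rcases A.irreducible _ hstable with h | h
    · exact Or.inr (by rw [h, Submodule.dualAnnihilator_bot])
    · exact Or.inl (by rw [h, Submodule.dualAnnihilator_top])

lemma IsHighestFunctional.linearMap_eq_zero {φ : Module.Dual ℂ A.V}
    (hφ : A.IsHighestFunctional φ) {W : Type*} [AddCommGroup W] [Module ℂ W]
    {T : Module.Dual ℂ A.V →ₗ[ℂ] W} (hTφ : T φ = 0)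
    (hT : ∀ i j : Fin n, i < j → ∀ ψ, T ψ = 0 → T (ψ ∘ₗ A.E i j) = 0) : T = 0 :=
  LinearMap.ker_eq_top.mp
    ((dual hφ).eq_top_of_hv_mem (P := LinearMap.ker T) hTφ fun i j hij ψ => hT j i hij ψ)

lemma IsHighestFunctional.eq_zero {φ : Module.Dual ℂ A.V} (hφ : A.IsHighestFunctional φ) {v : A.V}
    (hup : ∀ i j : Fin n, i < j → A.E i j v = 0) (hv : φ v = 0) : v = 0 := by
  have : Module.Dual.eval ℂ A.V v = 0 :=
    hφ.linearMap_eq_zero hv fun i j hij ψ _ => by simp [hup i j hij]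
  exact (Module.forall_dual_apply_eq_zero_iff ℂ v).mp fun ψ => LinearMap.congr_fun this ψ

lemma mem_span_hv {v : A.V} (hup : ∀ i j : Fin n, i < j → A.E i j v = 0) :
    ∃ c : ℂ, v = c • A.hv := by
  obtain ⟨φ, hφ⟩ := A.exists_isHighestFunctional
  refine ⟨φ v / φ A.hv, sub_eq_zero.mp (hφ.eq_zero (fun i j hij => ?_) ?_)⟩
  · simp [hup i j hij, A.hv_upper i j hij]
  · simp [hφ.apply_hv_ne_zero]

end GLRep

/-! ### The quadratic relations -/

namespace GLRep

variable {n : ℕ} {lam : Fin n → ℂ} (A : GLRep n lam)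

/-- The operator `∑_{a < j} E i a E a j - μ_j E i j`. If `ζ ∈ L(λ) ⊗ L(μ)` is killed by all
`t_{ij}^{(r)}` with `i < j`, these operators kill the component of `ζ` along the highest vector of
`L(μ)`. -/
noncomputable def rel (mu : Fin n → ℂ) (i j : Fin n) : Module.End ℂ A.V :=
  ∑ a ∈ Finset.Iio j, A.E i a * A.E a j - mu j • A.E i j

lemma rel_apply (mu : Fin n → ℂ) (i j : Fin n) (v : A.V) :
    A.rel mu i j v = ∑ a ∈ Finset.Iio j, A.E i a (A.E a j v) - mu j • A.E i j v := by
  simp [rel]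

lemma lie_E_rel (mu : Fin n → ℂ) {a b i j : Fin n} (ha : a < j) (hb : b < j) :
    ⁅A.E a b, A.rel mu i j⁆ = if b = i then A.rel mu a j else 0 := by
  simp only [rel, lie_sub, lie_smul, lie_sum, lie_mul_eq, lie_E, if_neg ha.ne', sub_zero]
  simp only [sub_mul, mul_ite, ite_mul, zero_mul, mul_zero, Finset.sum_add_distrib,
    Finset.sum_sub_distrib, Finset.sum_ite_eq, Finset.sum_ite_eq', Finset.mem_Iio, ha, hb,
    if_true]
  split_ifs <;> simp

lemma lie_E_diag_rel (mu : Fin n → ℂ) (b i j : Fin n) :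
    ⁅A.E b b, A.rel mu i j⁆ = root i j b • A.rel mu i j := by
  simp only [rel, lie_sub, lie_smul, lie_sum, lie_mul_eq, lie_E_diag, smul_sub, Finset.smul_sum,
    smul_mul_assoc, mul_smul_comm, ← add_smul, smul_comm (mu j)]
  simp [root]

variable {A}

/-- `v` is killed by the raising operators of `gl_k`. -/
def IsHighestBelow (A : GLRep n lam) (k : ℕ) (v : A.V) : Prop :=
  ∀ i j : Fin n, i < j → (j : ℕ) < k → A.E i j v = 0

lemma IsHighestBelow.rel_apply {j : Fin n} {v : A.V} (hH : A.IsHighestBelow j v) {ν : Fin n → ℂ}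
    (hv : A.IsWeightVector ν v) (mu : Fin n → ℂ) {i : Fin n} (hi : i < j) :
    A.rel mu i j v = ∑ a ∈ Finset.Iio i, A.E i a (A.E a j v)
      + (lshiftC n ν i - lshiftC n mu j) • A.E i j v := by
  have hsplit : Finset.Iio j = Finset.Iio i ∪ insert i (Finset.Ioo i j) := by
    ext a
    simp only [Finset.mem_Iio, Finset.mem_union, Finset.mem_insert, Finset.mem_Ioo]
    lia
  have hdisj : Disjoint (Finset.Iio i) (insert i (Finset.Ioo i j)) := by
    rw [Finset.disjoint_left]
    intro a
    simp only [Finset.mem_Iio, Finset.mem_insert, Finset.mem_Ioo]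
    lia
  have hdiag : A.E i i (A.E i j v) = (ν i + 1) • A.E i j v := by
    rw [E_apply_E, hv, lie_E_of_ne _ _ hi.ne', map_smul, add_smul, one_smul]
  have hIoo : ∀ a ∈ Finset.Ioo i j, A.E i a (A.E a j v) = A.E i j v := by
    intro a ha
    rw [Finset.mem_Ioo] at ha
    rw [E_apply_E, hH i a ha.1 ha.2, map_zero, zero_add, lie_E_of_ne _ _ hi.ne']
  obtain ⟨d, hd⟩ := Nat.exists_eq_add_of_lt hi
  rw [GLRep.rel_apply, hsplit, Finset.sum_union hdisj, Finset.sum_insert Finset.left_notMem_Ioo,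
    hdiag, Finset.sum_congr rfl hIoo, Finset.sum_const, Fin.card_Ioo,
    show (j : ℕ) - i - 1 = d by omega, ← Nat.cast_smul_eq_nsmul ℂ]
  simp only [lshiftC, hd]
  push_cast
  module

end GLRep

/-! ### Adapted vectors -/

namespace GLRep

variable {n : ℕ} {lam : Fin n → ℂ} {A : GLRep n lam} {mu ν : Fin n → ℂ} {v : A.V}

lemma lie_rel_E (mu : Fin n → ℂ) {r i j : Fin n} (hr : r < j) (hi : i < j) :
    ⁅A.rel mu i j, A.E r j⁆ = A.E r j * A.E i j := by
  rw [← lie_skew]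
  simp only [rel, lie_sub, lie_smul, lie_sum, lie_mul_eq, lie_E, if_neg hi.ne', if_neg hr.ne',
    zero_sub, sub_self, smul_zero, sub_zero, neg_mul, ite_mul, mul_ite, zero_mul, mul_zero,
    Finset.sum_add_distrib, Finset.sum_neg_distrib, Finset.sum_ite_eq, Finset.sum_ite_eq',
    Finset.mem_Iio, hr, lt_irrefl, if_true, if_false, add_zero, neg_neg]
  exact (A.commute_E hi.ne' hr.ne').eq.symm

lemma rel_pow_apply {r i j : Fin n} (hr : r < j) (hi : i < j) (hrel : A.rel mu i j v = 0) (N : ℕ) :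
    A.rel mu i j ((A.E r j ^ N) v) = (N : ℂ) • A.E i j ((A.E r j ^ N) v) := by
  have hcomm : Commute (A.E r j) (A.E i j) := A.commute_E hi.ne' hr.ne'
  cases N with
  | zero => simp [hrel]
  | succ N =>
    have h := leibniz_lie (A.rel mu i j) (A.E r j ^ (N + 1)) v
    rw [lie_pow_succ_of_commute (by
      rw [lie_rel_E mu hr hi]; exact (Commute.refl _).mul_right hcomm), lie_rel_E mu hr hi,
      ← mul_assoc, ← pow_succ, (hcomm.pow_left (N + 1)).eq] at h
    simpa [hrel, ← Nat.cast_smul_eq_nsmul ℂ] using h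

lemma IsHighestBelow.pow_E {r j : Fin n} (hrj : r < j) (hH : A.IsHighestBelow j v)
    (hr : ∀ a < r, A.E a j v = 0) (N : ℕ) :
    A.IsHighestBelow j ((A.E r j ^ N) v) ∧ ∀ a < r, A.E a j ((A.E r j ^ N) v) = 0 := by
  induction N with
  | zero => exact ⟨hH, hr⟩
  | succ N ih =>
    rw [pow_succ', Module.End.mul_apply]
    refine ⟨fun a b hab hb => ?_, fun a ha => ?_⟩
    · rw [E_apply_E, ih.1 a b hab hb, map_zero, zero_add, lie_E, if_neg (hab.trans hb).ne',
        sub_zero]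
      split_ifs with hbr
      · exact ih.2 a (hbr ▸ hab)
      · rfl
    · rw [E_apply_E, ih.2 a ha, map_zero, zero_add,
        commute_iff_lie_eq.mp (A.commute_E hrj.ne' (ha.trans hrj).ne'), LinearMap.zero_apply]

/-- A nonzero vector `v` of weight `ν`, highest for `gl_k`, which satisfies the quadratic relations
in the columns of index at least `k`. -/
structure IsAdapted (A : GLRep n lam) (mu : Fin n → ℂ) (k : ℕ) (ν : Fin n → ℂ) (v : A.V) :
    Prop where
  ne_zero : v ≠ 0
  weight : A.IsWeightVector ν v
  highest : A.IsHighestBelow k v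
  rel : ∀ i j : Fin n, i < j → k ≤ j → A.rel mu i j v = 0

namespace IsAdapted

lemma natLT {k : ℕ} (h : A.IsAdapted mu k ν v) {i j : Fin n} (hij : i < j) (hj : (j : ℕ) < k) :
    NatLT (lshiftC n ν j) (lshiftC n ν i) := by
  refine natLT_lshiftC hij ?_
  obtain ⟨N, hN, -⟩ := h.weight.exists_nat_sub_eq h.ne_zero hij.ne (h.highest i j hij hj)
  exact ⟨N, by linear_combination hN⟩

lemma rel_pow {k : ℕ} (h : A.IsAdapted mu k ν v) {a b : Fin n} (ha : (a : ℕ) ≤ k)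
    (hb : (b : ℕ) ≤ k) (N : ℕ) (i j : Fin n) (hij : i < j) (hj : k + 1 ≤ j) :
    A.rel mu i j ((A.E a b ^ N) v) = 0 := by
  induction N generalizing i with
  | zero => exact h.rel i j hij (by lia)
  | succ N ih =>
    have hlie := leibniz_lie (A.E a b) (A.rel mu i j) ((A.E a b ^ N) v)
    rw [A.lie_E_rel mu (by lia) (by lia)] at hlie
    simp only [Module.End.lie_apply, ih i hij, map_zero] at hlie
    rw [pow_succ', Module.End.mul_apply]
    split_ifs at hlie
    · rw [ih a (by lia), zero_add] at hlie
      exact hlie.symm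
    · rw [LinearMap.zero_apply, zero_add] at hlie
      exact hlie.symm

/-- If `v` is not highest for `gl_{j+1}`, the vector obtained by raising it with the topmost
`E r j` that does not kill it is. -/
lemma isHighestBelow_succ {r j : Fin n} (h : A.IsAdapted mu j ν v) (hrj : r < j)
    (hν : lshiftC n ν r = lshiftC n mu j) (hr : ∀ a < r, A.E a j v = 0) {N : ℕ}
    (hN : (A.E r j ^ (N + 1)) v = 0) : A.IsHighestBelow (j + 1) ((A.E r j ^ N) v) := by
  obtain ⟨hH, hlt⟩ := h.highest.pow_E hrj hr N
  suffices hcol : ∀ i < j, A.E i j ((A.E r j ^ N) v) = 0 by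
    intro i k hik hk
    obtain hkj | rfl := (show k ≤ j by lia).lt_or_eq
    · exact hH i k hik hkj
    · exact hcol i hik
  intro i
  induction i using WellFoundedLT.induction with
  | ind i ih =>
  intro hij
  rcases lt_trichotomy i r with hir | rfl | hri
  · exact hlt i hir
  · rwa [← Module.End.mul_apply, ← pow_succ']
  · have hrel := hH.rel_apply (h.weight.pow r j N) mu hij
    rw [rel_pow_apply hrj hij (h.rel i j hij le_rfl), Finset.sum_eq_zero fun a ha => by
        rw [ih a (Finset.mem_Iio.mp ha) ((Finset.mem_Iio.mp ha).trans hij), map_zero], zero_add,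
      ← sub_eq_zero, ← sub_smul, ← hν, smul_eq_zero] at hrel
    refine hrel.resolve_left fun hzero => ?_
    refine ((h.natLT hri hij).trans_le ⟨N, rfl⟩).ne ?_
    rw [lshiftC_add_root_of_ne ν N hri.ne' hij.ne] at hzero
    linear_combination -hzero

lemma succ_or_exists_pow {j : Fin n} (h : A.IsAdapted mu j ν v) :
    A.IsAdapted mu (j + 1) ν v ∨ ∃ r < j, ∃ N > 0, lshiftC n ν r = lshiftC n mu j ∧
      (A.E r j ^ (N + 1)) v = 0 ∧
      A.IsAdapted mu (j + 1) (ν + N • root r j) ((A.E r j ^ N) v) := by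
  by_cases hcol : ∀ i < j, A.E i j v = 0
  · refine .inl ⟨h.ne_zero, h.weight, fun i k hik hk => ?_,
      fun i k hik hk => h.rel i k hik (by lia)⟩
    obtain hkj | rfl := (show k ≤ j by lia).lt_or_eq
    · exact h.highest i k hik hkj
    · exact hcol i hik
  right
  push Not at hcol
  obtain ⟨r, ⟨hrj, hr⟩, hmin⟩ := exists_minimal_of_wellFoundedLT _ hcol
  have hr' : ∀ a < r, A.E a j v = 0 := fun a ha =>
    by_contra fun hne => ha.not_ge (hmin ⟨ha.trans hrj, hne⟩ ha.le)
  have hν : lshiftC n ν r = lshiftC n mu j := by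
    have hrel := h.highest.rel_apply h.weight mu hrj
    rw [h.rel r j hrj le_rfl, Finset.sum_eq_zero fun a ha => by
      rw [hr' a (Finset.mem_Iio.mp ha), map_zero], zero_add, eq_comm, smul_eq_zero,
      or_iff_left hr] at hrel
    exact sub_eq_zero.mp hrel
  obtain ⟨N, hne, hN⟩ := exists_pow_apply_ne_zero (A.isNilpotent_E hrj.ne) h.ne_zero
  refine ⟨r, hrj, N, Nat.pos_of_ne_zero ?_, hν, hN, hne, h.weight.pow r j N,
    h.isHighestBelow_succ hrj hν hr' hN, h.rel_pow hrj.le le_rfl N⟩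
  rintro rfl
  exact hr (by simpa using hN)

lemma weight_eq (h : A.IsAdapted mu n ν v) : ν = lam := by
  obtain ⟨c, rfl⟩ := mem_span_hv fun i j hij => h.highest i j hij j.2
  refine h.weight.unique (fun i => ?_) h.ne_zero
  rw [map_smul, A.hv_diag, smul_comm]

lemma lshiftC_eq {k : ℕ} {ν : Fin n → ℂ} {v : A.V} (h : A.IsAdapted mu k ν v) (hkn : k ≤ n)
    {i : Fin n} (hi : (i : ℕ) < k)
    (hne : ∀ j : Fin n, k ≤ j → lshiftC n ν i ≠ lshiftC n mu j) :
    lshiftC n ν i = lshiftC n lam i := by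
  obtain rfl | hk := hkn.eq_or_lt
  · rw [h.weight_eq]
  rcases h.succ_or_exists_pow (j := ⟨k, hk⟩) with h' | ⟨r, -, N, -, hν, -, h'⟩
  · exact h'.lshiftC_eq hk (Nat.lt_succ_of_lt hi) fun j hj => hne j (Nat.le_of_succ_le hj)
  · have hir : i ≠ r := fun hir => hne ⟨k, hk⟩ le_rfl (hir ▸ hν)
    have heq := lshiftC_add_root_of_ne ν N hir (Fin.ne_of_lt hi : i ≠ ⟨k, hk⟩)
    rw [← heq]
    exact h'.lshiftC_eq hk (Nat.lt_succ_of_lt hi) fun j hj =>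
      heq ▸ hne j (Nat.le_of_succ_le hj)
termination_by n - k

lemma natLE_lshiftC_and_ne {r j : Fin n} (h : A.IsAdapted mu j ν v) (hr : r < j) {N : ℕ}
    (hN : 0 < N) (hν : lshiftC n ν r = lshiftC n mu j) (hz : (A.E r j ^ (N + 1)) v = 0)
    (hlam : ∀ s ≤ j, lshiftC n (ν + N • root r j) s = lshiftC n lam s) :
    NatLE (lshiftC n lam j) (lshiftC n mu j) ∧ ∀ s ≤ j, lshiftC n mu j ≠ lshiftC n lam s := by
  have hlt : NatLT (lshiftC n lam j) (lshiftC n mu j) := by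
    rw [← hν, ← hlam j le_rfl]
    refine NatLE.natLT_sub_natCast hr ?_
    simpa [root, hr.ne', sub_eq_add_neg] using
      h.weight.natLE_of_pow_apply_eq_zero h.ne_zero hr.ne hz
  refine ⟨hlt.le, fun s hs => ?_⟩
  obtain hsj | rfl := hs.lt_or_eq
  · rw [← hν, ← hlam s hs]
    rcases lt_trichotomy s r with hsr | rfl | hrs
    · rw [lshiftC_add_root_of_ne ν N hsr.ne hsj.ne]
      exact (h.natLT hsr hr).ne
    · rw [lshiftC_add_root_left ν N hr.ne]
      exact (natLT_add_natCast _ hN).ne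
    · rw [lshiftC_add_root_of_ne ν N hrs.ne' hsj.ne]
      exact (h.natLT hrs hsj).ne.symm
  · exact hlt.ne.symm

lemma exists_natLE_lshiftC {k : ℕ} {ν : Fin n → ℂ} {v : A.V} (h : A.IsAdapted mu k ν v)
    (hkn : k ≤ n) (hne : ∃ i : Fin n, (i : ℕ) < k ∧ lshiftC n ν i ≠ lshiftC n lam i) :
    ∃ J : Fin n, k ≤ J ∧ NatLE (lshiftC n lam J) (lshiftC n mu J) ∧
      ∀ s ≤ J, lshiftC n mu J ≠ lshiftC n lam s := by
  obtain rfl | hk := hkn.eq_or_lt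
  · obtain ⟨i, -, hi⟩ := hne
    exact absurd (by rw [h.weight_eq]) hi
  rcases h.succ_or_exists_pow (j := ⟨k, hk⟩) with h' | ⟨r, hr, N, hN, hν, hz, h'⟩
  · obtain ⟨i, hi, hi'⟩ := hne
    obtain ⟨J, hJ, hJ'⟩ := h'.exists_natLE_lshiftC hk ⟨i, Nat.lt_succ_of_lt hi, hi'⟩
    exact ⟨J, Nat.le_of_succ_le hJ, hJ'⟩
  by_cases hlam : ∀ s ≤ ⟨k, hk⟩, lshiftC n (ν + N • root r ⟨k, hk⟩) s = lshiftC n lam s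
  · exact ⟨⟨k, hk⟩, le_rfl, h.natLE_lshiftC_and_ne hr hN hν hz hlam⟩
  · push Not at hlam
    obtain ⟨s, hs, hs'⟩ := hlam
    obtain ⟨J, hJ, hJ'⟩ := h'.exists_natLE_lshiftC hk ⟨s, Nat.lt_succ_of_le hs, hs'⟩
    exact ⟨J, Nat.le_of_succ_le hJ, hJ'⟩
termination_by n - k

end IsAdapted

end GLRep

/-! ### The component space -/

lemma exists_forall_apply_eq_smul {ι k V : Type*} [Finite ι] [Field k] [IsAlgClosed k]
    [AddCommGroup V] [Module k V] [FiniteDimensional k V] {f : ι → Module.End k V}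
    (hf : ∀ i j, Commute (f i) (f j)) {P : Submodule k V} (hP : P ≠ ⊥)
    (hfP : ∀ i, ∀ v ∈ P, f i v ∈ P) : ∃ v ∈ P, v ≠ 0 ∧ ∀ i, ∃ c : k, f i v = c • v := by
  classical
  have := Fintype.ofFinite ι
  suffices ∀ s : Finset ι, ∃ Q ≤ P, Q ≠ ⊥ ∧ (∀ i, ∀ v ∈ Q, f i v ∈ Q) ∧
      ∀ i ∈ s, ∃ c : k, ∀ v ∈ Q, f i v = c • v by
    obtain ⟨Q, hQP, hQ, -, hQf⟩ := this Finset.univ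
    obtain ⟨v, hvQ, hv⟩ := Q.exists_mem_ne_zero_of_ne_bot hQ
    exact ⟨v, hQP hvQ, hv, fun i => (hQf i (Finset.mem_univ i)).imp fun c hc => hc v hvQ⟩
  intro s
  induction s using Finset.induction with
  | empty => exact ⟨P, le_rfl, hP, hfP, by simp⟩
  | insert i s _ ih =>
    obtain ⟨Q, hQP, hQ, hfQ, hQs⟩ := ih
    have : Nontrivial Q := Submodule.nontrivial_iff_ne_bot.mpr hQ
    obtain ⟨c, hc⟩ := Module.End.exists_eigenvalue ((f i).restrict (hfQ i))
    obtain ⟨w, hw⟩ := hc.exists_hasEigenvector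
    refine ⟨Q ⊓ (f i).eigenspace c, inf_le_left.trans hQP, ?_, fun j v hv => ⟨hfQ j v hv.1, ?_⟩, ?_⟩
    · refine (Submodule.ne_bot_iff _).mpr ⟨w, ⟨w.2, ?_⟩, by simpa using hw.2⟩
      exact Module.End.mem_eigenspace_iff.mpr (congrArg Subtype.val hw.apply_eq_smul)
    · exact Module.End.mapsTo_genEigenspace_of_comm (hf i j) c 1 hv.2
    · refine Finset.forall_mem_insert .. |>.mpr ⟨⟨c, fun v hv => ?_⟩, fun j hj => ?_⟩
      · exact Module.End.mem_eigenspace_iff.mp hv.2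
      · exact (hQs j hj).imp fun d hd v hv => hd v hv.1

namespace GLRep

variable {n : ℕ} {lam : Fin n → ℂ} (A : GLRep n lam)

lemma exists_isWeightVector_mem {P : Submodule ℂ A.V} (hP : P ≠ ⊥)
    (hdiag : ∀ i, ∀ v ∈ P, A.E i i v ∈ P) : ∃ v ∈ P, v ≠ 0 ∧ ∃ ν, A.IsWeightVector ν v := by
  obtain ⟨v, hvP, hv, hν⟩ := exists_forall_apply_eq_smul (f := fun i => A.E i i)
    (fun i j => commute_iff_lie_eq.mpr (by simp [lie_E_diag, root, Pi.single_apply])) hP hdiag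
  choose ν hν using hν
  exact ⟨v, hvP, hv, ν, hν⟩

/-- The vectors satisfying the relations that hold for the component, along the highest vector of
`L(μ)`, of a vector of `L(λ) ⊗ L(μ)` killed by all `t_{ij}^{(r)}` with `i < j`. -/
noncomputable def componentSpace (mu : Fin n → ℂ) : Submodule ℂ A.V :=
  ⨅ (i) (j) (_ : i < j), LinearMap.ker (A.rel mu i j) ⊓
    ⨅ (N : ℕ) (_ : mu i - mu j = N), LinearMap.ker (A.E i j ^ (N + 1))

variable {A} {mu : Fin n → ℂ}

lemma mem_componentSpace {v : A.V} : v ∈ A.componentSpace mu ↔ ∀ i j, i < j →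
    A.rel mu i j v = 0 ∧ ∀ N : ℕ, mu i - mu j = N → (A.E i j ^ (N + 1)) v = 0 := by
  simp [componentSpace]

lemma E_diag_mem_componentSpace (b : Fin n) {v : A.V} (hv : v ∈ A.componentSpace mu) :
    A.E b b v ∈ A.componentSpace mu := by
  rw [mem_componentSpace] at hv ⊢
  have key : ∀ {T : Module.End ℂ A.V} {c : ℂ}, ⁅A.E b b, T⁆ = c • T → T v = 0 →
      T (A.E b b v) = 0 := fun {T c} hT hTv => by
    have h := leibniz_lie (A.E b b) T v
    simpa [hT, hTv, eq_comm] using h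
  exact fun i j hij => ⟨key (A.lie_E_diag_rel mu b i j) (hv i j hij).1, fun N hN =>
    key (lie_pow_of_lie_eq_smul (A.lie_E_diag b i j) (N + 1)) ((hv i j hij).2 N hN)⟩

lemma IsHighestBelow.natLT_of_mem_componentSpace {r s j : Fin n} {v : A.V}
    (hH : A.IsHighestBelow j v) (hv : v ∈ A.componentSpace mu) (hrs : r ≤ s) (hsj : s < j)
    (hmu : NatLE (mu j) (mu s)) {N : ℕ} (hN : (A.E r j ^ N) v ≠ 0) :
    NatLT (lshiftC n mu j + N) (lshiftC n mu s) := by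
  obtain ⟨K, hK⟩ := hmu
  have hsv : (A.E s j ^ (K + 1)) v = 0 :=
    (mem_componentSpace.mp hv s j hsj).2 K (by rw [hK]; ring)
  have hrv : (A.E r j ^ (K + 1)) v = 0 := by
    obtain rfl | hrs := hrs.eq_or_lt
    · exact hsv
    have hlie := A.lie_E_of_ne s (hrs.trans hsj).ne'
    rw [← hlie]
    refine pow_apply_eq_zero_of_lie_commute ?_ ?_ (hH r s hrs hsj) hsv <;> rw [hlie]
    · exact A.commute_E hrs.ne' (hrs.trans hsj).ne'
    · exact A.commute_E (hrs.trans hsj).ne' hsj.ne'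
  obtain ⟨d, rfl⟩ : ∃ d, K = N + d := Nat.exists_eq_add_of_le <| by
    by_contra hlt
    exact hN (pow_apply_eq_zero_of_le (not_le.mp hlt) hrv)
  have := NatLE.natLT_sub_natCast (x := mu j + N) (y := mu s) hsj ⟨d, by rw [hK]; push_cast; ring⟩
  rwa [add_sub_right_comm] at this

lemma exists_isHighestBelow_not_succ {v : A.V} (hv : ¬ A.IsHighestBelow n v) :
    ∃ j : Fin n, A.IsHighestBelow j v ∧ ¬ A.IsHighestBelow (j + 1) v := by
  obtain ⟨k, hk, hk'⟩ := Nat.exists_not_and_succ_of_not_zero_of_exists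
    (p := fun k => ¬ A.IsHighestBelow k v) (by simp [IsHighestBelow]) ⟨n, hv⟩
  have hkn : k < n := by
    by_contra hnk
    exact hv fun i j hij _ => not_not.mp hk i j hij (by lia)
  exact ⟨⟨k, hkn⟩, not_not.mp hk, hk'⟩

lemma componentSpace_inf_ker_eq_bot {φ : Module.Dual ℂ A.V} (hφ : A.IsHighestFunctional φ)
    (hmu : ∀ i j, i < j → NatLE (mu j) (mu i))
    (hsep : ∀ i j, i < j → lshiftC n mu j ∉ bracketC n (lshiftC n lam) i j ∨
      lshiftC n lam i ∉ bracketC n (lshiftC n mu) i j) :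
    A.componentSpace mu ⊓ LinearMap.ker φ = ⊥ := by
  by_contra hne
  obtain ⟨v, ⟨hv, hφv⟩, hv0, ν, hν⟩ := A.exists_isWeightVector_mem hne fun i v hv =>
    ⟨E_diag_mem_componentSpace i hv.1, by
      have := LinearMap.congr_fun (hφ.comp_diag i) v
      simpa [LinearMap.mem_ker.mp hv.2] using this⟩
  obtain ⟨j, hj, hj'⟩ := exists_isHighestBelow_not_succ fun hH : A.IsHighestBelow n v =>
    hv0 (hφ.eq_zero (fun i j hij => hH i j hij j.2) hφv)
  have h : A.IsAdapted mu j ν v :=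
    ⟨hv0, hν, hj, fun i k hik _ => (mem_componentSpace.mp hv i k hik).1⟩
  obtain ⟨r, hr, N, hN, hνr, -, h'⟩ := h.succ_or_exists_pow.resolve_left fun h' => hj' h'.highest
  have hgap : ∀ s, r ≤ s → s < j → NatLT (lshiftC n mu j + N) (lshiftC n mu s) := fun s hrs hsj =>
    hj.natLT_of_mem_componentSpace hv hrs hsj (hmu s j hsj) h'.ne_zero
  have hlt : ∀ s, j ≤ s → NatLT (lshiftC n mu s) (lshiftC n mu j + N) := fun s hjs =>
    (natLE_lshiftC hmu hjs).trans_lt (natLT_add_natCast _ hN)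
  have hlam : lshiftC n lam r = lshiftC n mu j + N := by
    have hνr' := (lshiftC_add_root_left ν N hr.ne).trans (by rw [hνr])
    rw [← hνr']
    refine (h'.lshiftC_eq j.2 (Nat.lt_succ_of_lt hr) fun s hs => ?_).symm
    exact hνr' ▸ (hlt s (Nat.le_of_succ_le hs)).ne.symm
  obtain ⟨J, hjJ, hJ, hJs⟩ := h.exists_natLE_lshiftC j.2.le
    ⟨r, hr, by rw [hlam, hνr]; exact (natLT_add_natCast _ hN).ne⟩
  have hJr : NatLE (lshiftC n mu J) (lshiftC n lam r) := hlam ▸ (hlt J hjJ).le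
  rcases hsep r J (hr.trans_le hjJ) with hs | hs
  · exact hs ⟨hJ, hJr, fun s _ => hJs s⟩
  · refine hs ⟨hJr, hlam ▸ (hgap r le_rfl hr).le, fun s hrs _ => hlam ▸ ?_⟩
    obtain hsj | hjs := lt_or_ge s j
    · exact (hgap s hrs hsj).ne
    · exact (hlt s hjs).ne.symm

end GLRep

/-! ### Contraction of tensors with functionals -/

section Contract

variable {R M N : Type*} [CommRing R] [AddCommGroup M] [Module R M] [AddCommGroup N] [Module R N]

/-- Contraction of the second tensor factor with a functional: `x ⊗ y ↦ ψ ↦ ψ y • x`. -/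
noncomputable def contract : M ⊗[R] N →ₗ[R] Module.Dual R N →ₗ[R] M :=
  TensorProduct.lift (LinearMap.smulRightₗ ∘ₗ Module.Dual.eval R N).flip

lemma contract_tmul (x : M) (y : N) (ψ : Module.Dual R N) : contract (x ⊗ₜ y) ψ = ψ y • x := rfl

lemma contract_map (f : Module.End R M) (g : Module.End R N) (ζ : M ⊗[R] N)
    (ψ : Module.Dual R N) :
    contract (TensorProduct.map f g ζ) ψ = f (contract ζ (ψ ∘ₗ g)) := by
  induction ζ with
  | zero => simp
  | tmul x y => simp [contract_tmul]
  | add ζ ξ hζ hξ => simp [hζ, hξ]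

lemma contract_injective [Module.Free R N] :
    Function.Injective (contract : M ⊗[R] N →ₗ[R] Module.Dual R N →ₗ[R] M) := by
  classical
  let b := Module.Free.chooseBasis R N
  have hcoord : ∀ (ζ : M ⊗[R] N) i,
      TensorProduct.equivFinsuppOfBasisRight b ζ i = contract ζ (b.coord i) := by
    intro ζ i
    induction ζ with
    | zero => simp
    | tmul x y => simp [contract_tmul]
    | add ζ ξ hζ hξ => simp [hζ, hξ]
  rw [injective_iff_map_eq_zero]
  refine fun ζ hζ => (TensorProduct.equivFinsuppOfBasisRight (M := M) b).map_eq_zero_iff.mp ?_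
  ext i
  rw [hcoord, hζ, LinearMap.zero_apply, Finsupp.zero_apply]

end Contract

/-! ### Highest singular vectors of the tensor product -/

namespace GLRep

variable {n : ℕ} {lam mu : Fin n → ℂ} {A : GLRep n lam} {B : GLRep n mu}

lemma natLE_of_lt (A : GLRep n lam) {i j : Fin n} (hij : i < j) : NatLE (lam j) (lam i) := by
  obtain ⟨N, hN, -⟩ :=
    IsWeightVector.exists_nat_sub_eq A.hv_diag A.hv_ne hij.ne (A.hv_upper i j hij)
  exact ⟨N, by rw [← hN]; ring⟩

variable {ζ : A.V ⊗[ℂ] B.V} {φ : Module.Dual ℂ B.V}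

lemma contract_comp_E {i j : Fin n} (h : t1 A B i j ζ = 0) (ψ : Module.Dual ℂ B.V) :
    contract ζ (ψ ∘ₗ B.E i j) = -A.E i j (contract ζ ψ) := by
  have := congrArg (contract · ψ) h
  simp only [t1, LinearMap.add_apply, map_add, contract_map, map_zero, LinearMap.zero_apply,
    LinearMap.id_apply] at this
  exact eq_neg_of_add_eq_zero_right this

lemma contract_dualMap_E_pow {i j : Fin n} (h : t1 A B i j ζ = 0) (K : ℕ)
    (ψ : Module.Dual ℂ B.V) :
    contract ζ (((B.E i j).dualMap ^ K) ψ) = (-1 : ℂ) ^ K • (A.E i j ^ K) (contract ζ ψ) := by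
  induction K generalizing ψ with
  | zero => simp
  | succ K ih =>
    rw [pow_succ, Module.End.mul_apply, ih, LinearMap.dualMap_apply', contract_comp_E h, map_neg,
      pow_succ, pow_succ, Module.End.mul_apply]
    module

lemma eq_zero_of_contract_eq_zero (hφ : B.IsHighestFunctional φ)
    (hζ1 : ∀ i j, i < j → t1 A B i j ζ = 0) (hζ : contract ζ φ = 0) : ζ = 0 :=
  contract_injective <| (hφ.linearMap_eq_zero hζ fun i j hij ψ hψ => by
    rw [contract_comp_E (hζ1 i j hij), hψ, map_zero, neg_zero]).trans (map_zero _).symm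

lemma rel_contract_eq_zero (hφ : B.IsHighestFunctional φ)
    (hζ1 : ∀ i j, i < j → t1 A B i j ζ = 0) {i j : Fin n} (hζ2 : t2 A B i j ζ = 0) :
    A.rel mu i j (contract ζ φ) = 0 := by
  have hterm : ∀ a, contract (TensorProduct.map (A.E i a) (B.E a j) ζ) φ =
      (if a = j then mu j • A.E i j (contract ζ φ) else 0) -
        if a ∈ Finset.Iio j then A.E i a (A.E a j (contract ζ φ)) else 0 := by
    intro a
    rw [contract_map]
    rcases lt_trichotomy a j with h | rfl | h
    · rw [contract_comp_E (hζ1 a j h), if_neg h.ne, if_pos (Finset.mem_Iio.mpr h), map_neg,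
        zero_sub]
    · simp [hφ.comp_diag]
    · rw [hφ.comp_lower a j h]
      simp [h.ne', h.le]
  have := congrArg (contract · φ) hζ2
  simp only [t2, LinearMap.sum_apply, map_sum, hterm, Finset.sum_sub_distrib, Finset.sum_ite_eq',
    Finset.mem_univ, if_true, Finset.sum_ite_mem, Finset.univ_inter, map_zero,
    LinearMap.zero_apply] at this
  rw [rel_apply, ← neg_sub, this, neg_zero]

lemma contract_mem_componentSpace (hφ : B.IsHighestFunctional φ)
    (hζ1 : ∀ i j, i < j → t1 A B i j ζ = 0) (hζ2 : ∀ i j, i < j → t2 A B i j ζ = 0) :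
    contract ζ φ ∈ A.componentSpace mu := by
  refine mem_componentSpace.mpr fun i j hij =>
    ⟨rel_contract_eq_zero hφ hζ1 (hζ2 i j hij), fun N hN => ?_⟩
  obtain ⟨N', hN', -, hzero⟩ := IsWeightVector.exists_nat_sub_eq (A := dual hφ) hφ.comp_diag
    (dual hφ).hv_ne hij.ne ((dual hφ).hv_upper i j hij)
  obtain rfl : N' = N := Nat.cast_injective (hN'.symm.trans hN)
  have hφN : ((B.E i j).dualMap ^ (N' + 1)) φ = 0 := hzero
  have := contract_dualMap_E_pow (hζ1 i j hij) (N' + 1) φ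
  rw [hφN, map_zero, eq_comm, smul_eq_zero] at this
  exact this.resolve_left (pow_ne_zero _ (by norm_num))

lemma t1_hv_tmul_hv {i j : Fin n} (hij : i < j) : t1 A B i j (A.hv ⊗ₜ B.hv) = 0 := by
  simp [t1, A.hv_upper i j hij, B.hv_upper i j hij]

lemma t2_hv_tmul_hv {i j : Fin n} (hij : i < j) : t2 A B i j (A.hv ⊗ₜ B.hv) = 0 := by
  rw [t2, LinearMap.sum_apply]
  refine Finset.sum_eq_zero fun a _ => ?_
  rw [TensorProduct.map_tmul]
  obtain hia | hai := lt_or_ge i a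
  · rw [A.hv_upper i a hia, TensorProduct.zero_tmul]
  · rw [B.hv_upper a j (hai.trans_lt hij), TensorProduct.tmul_zero]

lemma highest_singular_vector_eq_smul_hv
    (hsep : ∀ i j, i < j → lshiftC n mu j ∉ bracketC n (lshiftC n lam) i j ∨
      lshiftC n lam i ∉ bracketC n (lshiftC n mu) i j)
    (hζ1 : ∀ i j, i < j → t1 A B i j ζ = 0) (hζ2 : ∀ i j, i < j → t2 A B i j ζ = 0) :
    ∃ c : ℂ, ζ = c • (A.hv ⊗ₜ B.hv) := by
  obtain ⟨φ, hφ⟩ := A.exists_isHighestFunctional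
  obtain ⟨ψ, hψ⟩ := B.exists_isHighestFunctional
  let c := φ (contract ζ ψ) / (φ A.hv * ψ B.hv)
  let ξ := ζ - c • (A.hv ⊗ₜ[ℂ] B.hv)
  have hξ1 : ∀ i j, i < j → t1 A B i j ξ = 0 := fun i j hij => by
    simp [ξ, hζ1 i j hij, t1_hv_tmul_hv hij]
  have hξ2 : ∀ i j, i < j → t2 A B i j ξ = 0 := fun i j hij => by
    simp [ξ, hζ2 i j hij, t2_hv_tmul_hv hij]
  have hker : φ (contract ξ ψ) = 0 := by
    have := hφ.apply_hv_ne_zero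
    have := hψ.apply_hv_ne_zero
    simp only [ξ, c, map_sub, map_smul, LinearMap.sub_apply, LinearMap.smul_apply, contract_tmul,
      smul_eq_mul]
    field_simp
    ring
  have hmem : contract ξ ψ ∈ A.componentSpace mu ⊓ LinearMap.ker φ :=
    ⟨contract_mem_componentSpace hψ hξ1 hξ2, hker⟩
  rw [componentSpace_inf_ker_eq_bot hφ (fun i j => B.natLE_of_lt) hsep, Submodule.mem_bot] at hmem
  exact ⟨c, sub_eq_zero.mp (eq_zero_of_contract_eq_zero hψ hξ1 hmem)⟩

end GLRep

/-! ### Extremal vectors and twisted modules -/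

namespace GLRep

variable {n : ℕ} {lam : Fin n → ℂ}

/-- `v` is a highest vector, of weight `lam`, for the action of the matrix units relabelled by
`σ`. -/
structure IsExtremalVector (A : GLRep n lam) (σ : Equiv.Perm (Fin n)) (v : A.V) : Prop where
  ne_zero : v ≠ 0
  upper : ∀ i j : Fin n, i < j → A.E (σ i) (σ j) v = 0
  diag : ∀ i, A.E (σ i) (σ i) v = lam i • v

/-- The module with the matrix units relabelled by a permutation; it is again `L(λ)`, with an
extremal vector in the role of the highest vector. -/
def twist {A : GLRep n lam} {σ : Equiv.Perm (Fin n)} {v : A.V} (h : A.IsExtremalVector σ v) :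
    GLRep n lam where
  V := A.V
  E i j := A.E (σ i) (σ j)
  commRel i j k l := by simp only [A.commRel, EmbeddingLike.apply_eq_iff_eq]
  hv := v
  hv_ne := h.ne_zero
  hv_upper := h.upper
  hv_diag := h.diag
  irreducible U hU := A.irreducible U fun i j v hv => by
    simpa using hU (σ.symm i) (σ.symm j) v hv

lemma E_apply_pow_apply_hv_eq_zero (A : GLRep n lam) {p q a b : Fin n} (hpq : (p : ℕ) + 1 = q)
    (hab : a < b) (hne : ¬(a = p ∧ b = q)) (N : ℕ) : A.E a b ((A.E q p ^ N) A.hv) = 0 := by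
  induction N generalizing a b with
  | zero => simpa using A.hv_upper a b hab
  | succ N ih =>
    rw [pow_succ', Module.End.mul_apply, E_apply_E, ih hab hne, lie_E, map_zero, zero_add]
    split_ifs with hbq hpa hpa
    · exact absurd ⟨hpa.symm, hbq⟩ hne
    · simpa using ih (a := a) (b := p) (by lia) (by lia)
    · simpa using ih (a := q) (b := b) (by lia) (by lia)
    · simp

lemma swap_apply_lt_swap_apply {p q i j : Fin n} (hpq : (p : ℕ) + 1 = q) (hij : i < j)
    (hne : ¬(i = p ∧ j = q)) : Equiv.swap p q i < Equiv.swap p q j := by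
  rw [Equiv.swap_apply_def, Equiv.swap_apply_def]
  split_ifs <;> lia

lemma exists_isExtremalVector_swap (A : GLRep n lam) {p q : Fin n} (hpq : (p : ℕ) + 1 = q) :
    ∃ v, A.IsExtremalVector (Equiv.swap p q) v := by
  have hlt : p < q := by lia
  obtain ⟨N, hN, hne, hzero⟩ :=
    IsWeightVector.exists_nat_sub_eq A.hv_diag A.hv_ne hlt.ne (A.hv_upper p q hlt)
  refine ⟨_, hne, fun i j hij => ?_, fun i => ?_⟩
  · by_cases h : i = p ∧ j = q
    · rw [h.1, h.2, Equiv.swap_apply_left, Equiv.swap_apply_right, ← Module.End.mul_apply,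
        ← pow_succ', hzero]
    · refine A.E_apply_pow_apply_hv_eq_zero hpq (swap_apply_lt_swap_apply hpq hij h) ?_ N
      rw [Equiv.swap_apply_eq_iff, Equiv.swap_apply_eq_iff, Equiv.swap_apply_left,
        Equiv.swap_apply_right]
      lia
  · rw [IsWeightVector.pow A.hv_diag q p N]
    congr 1
    obtain rfl | hip := eq_or_ne i p
    · simp [root, hlt.ne.symm, ← hN]
    obtain rfl | hiq := eq_or_ne i q
    · simp [root, hlt.ne, ← hN]
    · simp [root, Equiv.swap_apply_of_ne_of_ne, hip, hiq]

lemma exists_isExtremalVector (A : GLRep n lam) (σ : Equiv.Perm (Fin n)) :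
    ∃ v, A.IsExtremalVector σ v := by
  cases n with
  | zero => exact ⟨A.hv, A.hv_ne, fun i => i.elim0, fun i => i.elim0⟩
  | succ m =>
    refine Submonoid.induction_of_closure_eq_top_right (Equiv.Perm.mclosure_swap_castSucc_succ m)
      σ ⟨A.hv, A.hv_ne, A.hv_upper, A.hv_diag⟩ ?_
    rintro τ _ ⟨i, rfl⟩ ⟨v, hv⟩
    obtain ⟨w, hw⟩ :=
      (twist hv).exists_isExtremalVector_swap (p := i.castSucc) (q := i.succ) (by simp)
    exact ⟨w, hw.ne_zero, hw.upper, hw.diag⟩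

lemma IsExtremalVector.exists_eq_smul {A : GLRep n lam} {v : A.V}
    (hv : A.IsExtremalVector Fin.revPerm v) {η : A.V} (hη : η ≠ 0)
    (hlow : ∀ i j : Fin n, j < i → A.E i j η = 0) : ∃ a : ℂ, v = a • η := by
  obtain ⟨a, rfl⟩ := mem_span_hv (A := twist hv) (v := η) fun i j hij =>
    hlow _ _ (Fin.rev_lt_rev.mpr hij)
  refine ⟨a⁻¹, (inv_smul_smul₀ ?_ v).symm⟩
  rintro rfl
  exact hη (zero_smul ℂ _)

end GLRep

theorem lowest_singular_vector_eq_smul_lowest_general {n : ℕ} {lam mu : Fin n → ℂ}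
    (hsep : ∀ i j : Fin n, i < j → lshiftC n mu j ∉ bracketC n (lshiftC n lam) i j ∨
      lshiftC n lam i ∉ bracketC n (lshiftC n mu) i j)
    (A : GLRep n lam) (B : GLRep n mu)
    {η : A.V} (hη : η ≠ 0) (hηlow : ∀ i j : Fin n, j < i → A.E i j η = 0)
    {η' : B.V} (hη' : η' ≠ 0) (hη'low : ∀ i j : Fin n, j < i → B.E i j η' = 0)
    {ζ' : A.V ⊗[ℂ] B.V}
    (hζ'1 : ∀ i j : Fin n, j < i → t1 A B i j ζ' = 0)
    (hζ'2 : ∀ i j : Fin n, j < i → t2 A B i j ζ' = 0) :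
    ∃ c : ℂ, ζ' = c • (η ⊗ₜ[ℂ] η') := by
  obtain ⟨v, hv⟩ := A.exists_isExtremalVector Fin.revPerm
  obtain ⟨w, hw⟩ := B.exists_isExtremalVector Fin.revPerm
  obtain ⟨c, hc⟩ : ∃ c : ℂ, ζ' = c • (v ⊗ₜ[ℂ] w) :=
    GLRep.highest_singular_vector_eq_smul_hv (A := GLRep.twist hv) (B := GLRep.twist hw) hsep
      (fun i j hij => hζ'1 _ _ (Fin.rev_lt_rev.mpr hij)) fun i j hij => by
        have := hζ'2 _ _ (Fin.rev_lt_rev.mpr hij)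
        rwa [t2, ← Equiv.sum_comp Fin.revPerm] at this
  obtain ⟨a, rfl⟩ := hv.exists_eq_smul hη hηlow
  obtain ⟨b, rfl⟩ := hw.exists_eq_smul hη' hη'low
  exact ⟨c * (a * b), by rw [hc, TensorProduct.smul_tmul_smul, smul_smul]⟩

/-- Under the separation conditions for all pairs `i < j`,
together with `m_1, m_n ∉ ⟨l_n, l_1⟩`, any vector `ζ'` of `L(λ) ⊗ L(μ)`
annihilated by all lower-triangular Yangian generators (`t_{ij}(u)ζ' = 0` for
`i > j`) is a scalar multiple of the tensor product `η ⊗ η'` of the lowest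
vectors of `L(λ)` and `L(μ)`. -/
theorem lowest_singular_vector_eq_smul_lowest
    (n : ℕ) (hn : 0 < n) (lam mu : Fin n → ℂ)
    (hlam : IsGLHighestWeight n lam) (hmu : IsGLHighestWeight n mu)
    (hsep : ∀ i j : Fin n, i < j → SepCond n lam mu i j)
    (hextra1 : lshiftC n mu ⟨0, hn⟩ ∉
      bracketC n (lshiftC n lam) ⟨0, hn⟩ ⟨n - 1, by omega⟩)
    (hextra2 : lshiftC n mu ⟨n - 1, by omega⟩ ∉
      bracketC n (lshiftC n lam) ⟨0, hn⟩ ⟨n - 1, by omega⟩)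
    (A : GLRep n lam) (B : GLRep n mu)
    (η : A.V) (hη : η ≠ 0) (hηlow : ∀ i j : Fin n, j < i → A.E i j η = 0)
    (η' : B.V) (hη' : η' ≠ 0) (hη'low : ∀ i j : Fin n, j < i → B.E i j η' = 0)
    (ζ' : A.V ⊗[ℂ] B.V)
    (hζ'1 : ∀ i j : Fin n, j < i → t1 A B i j ζ' = 0)
    (hζ'2 : ∀ i j : Fin n, j < i → t2 A B i j ζ' = 0) :
    ∃ c : ℂ, ζ' = c • (η ⊗ₜ[ℂ] η') :=
  lowest_singular_vector_eq_smul_lowest_general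
    (fun i j hij => (hsep i j hij).imp And.left And.right) A B hη hηlow hη' hη'low hζ'1 hζ'2
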